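/- Consider the canonical observable system of dimension n. There exists a constant c > 0, depending only on n, such that: if z = (z₁, …, z_n) is absolutely continuous on [0,1], f = (f₁, …, f_n) is integrable on [0,1], ż_i = z_{i+1} + f_i for 1 ≤ i ≤ n−1 and ż_n = f_n almost everywhere, and y = z₁, then ∫₀¹ |z(t)| dt ≤ c ( ∫₀¹ |y(t)| dt + ∫₀¹ |f(t)| dt ). -/

import Mathlib

open MeasureTheory

/-!
The unperturbed solutions are exactly the jets `(p, p', …, p^(n-1))` of polynomials `p` of degree
less than `n`. Let `p` be the polynomial whose jet at `0` is `z 0`. The error `z_i - p^(i)` vanishes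
at `0` and has derivative `(z_{i+1} - p^(i+1)) + f_i`, so descending induction on `i` bounds every
error uniformly by `n ∫ ‖f‖`; in particular `∫ |p| ≤ ∫ |y| + n ∫ ‖f‖`. On the finite-dimensional
space of polynomials of degree less than `n` the `L¹` norm on `[0, 1]` controls the supremum of
every derivative, hence `z` is controlled, even uniformly in time.
-/

open Polynomial Set

theorem exists_norm_apply_le_of_injective {𝕜 V E F : Type*} [NontriviallyNormedField 𝕜]
    [CompleteSpace 𝕜] [AddCommGroup V] [Module 𝕜 V] [FiniteDimensional 𝕜 V]
    [NormedAddCommGroup E] [NormedSpace 𝕜 E] [SeminormedAddCommGroup F] [NormedSpace 𝕜 F]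
    (T : V →ₗ[𝕜] E) (hT : Function.Injective T) (S : V →ₗ[𝕜] F) :
    ∃ C > 0, ∀ v, ‖S v‖ ≤ C * ‖T v‖ := by
  let e := LinearEquiv.ofInjective T hT
  obtain ⟨C, hC, hbound⟩ := (S ∘ₗ e.symm.toLinearMap).toContinuousLinearMap.bound
  refine ⟨C, hC, fun v => ?_⟩
  simpa [e] using hbound (e v)

theorem exists_mem_degreeLT_iterate_derivative_eval_zero {K : Type*} [Field K] [CharZero K]
    {n : ℕ} (v : Fin n → K) :
    ∃ p ∈ degreeLT K n, ∀ i : Fin n, (derivative^[i] p).eval 0 = v i := by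
  let p := (degreeLTEquiv K n).symm fun j => v j / (j : ℕ).factorial
  refine ⟨p, p.2, fun i => ?_⟩
  have hcoeff : (p : K[X]).coeff i = v i / (i : ℕ).factorial :=
    congrFun ((degreeLTEquiv K n).apply_symm_apply _) i
  have hfactorial : ((i : ℕ).factorial : K) ≠ 0 := mod_cast (i : ℕ).factorial_ne_zero
  rw [← coeff_zero_eq_eval_zero, coeff_iterate_derivative, zero_add, Nat.descFactorial_self,
    hcoeff, nsmul_eq_mul, mul_div_cancel₀ _ hfactorial]

theorem integrableOn_eval_Icc (p : ℝ[X]) (a b : ℝ) : IntegrableOn (fun t => p.eval t) (Icc a b) :=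
  p.continuous.integrableOn_Icc

/-- Restriction of real polynomials to `[a, b]`, as elements of `L¹([a, b])`. -/
noncomputable def polynomialToL1 (a b : ℝ) : ℝ[X] →ₗ[ℝ] (ℝ →₁[volume.restrict (Icc a b)] ℝ) where
  toFun p := (integrableOn_eval_Icc p a b).toL1
  map_add' p q := by simp only [eval_add]; exact Integrable.toL1_add _ _ _ _
  map_smul' c p := by simp only [eval_smul]; exact Integrable.toL1_smul _ _ _

theorem norm_polynomialToL1 (a b : ℝ) (p : ℝ[X]) :
    ‖polynomialToL1 a b p‖ = ∫ t in Icc a b, |p.eval t| :=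
  L1.norm_of_fun_eq_integral_norm (integrableOn_eval_Icc p a b)

theorem polynomialToL1_injective {a b : ℝ} (hab : a < b) :
    Function.Injective (polynomialToL1 a b) := by
  intro p q hpq
  have hae : (fun t => p.eval t) =ᵐ[volume.restrict (Icc a b)] fun t => q.eval t :=
    (Integrable.toL1_eq_toL1_iff _ _ (integrableOn_eval_Icc p a b)
      (integrableOn_eval_Icc q a b)).mp hpq
  have hon : EqOn (fun t => p.eval t) (fun t => q.eval t) (Icc a b) :=
    Measure.eqOn_Icc_of_ae_eq volume hab.ne hae p.continuousOn q.continuousOn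
  exact eq_of_infinite_eval_eq p q ((Icc_infinite hab).mono hon)

theorem exists_abs_iterate_derivative_eval_le {a b : ℝ} (hab : a < b) (n : ℕ) :
    ∃ C > 0, ∀ p ∈ degreeLT ℝ n, ∀ k : Fin n, ∀ t ∈ Icc a b,
      |(derivative^[k] p).eval t| ≤ C * ∫ s in Icc a b, |p.eval s| := by
  let restrict : ℝ[X] →ₗ[ℝ] C(Icc a b, ℝ) := (toContinuousMapOnAlgHom (Icc a b)).toLinearMap
  let jet : ℝ[X] →ₗ[ℝ] Fin n → C(Icc a b, ℝ) :=
    LinearMap.pi fun k => restrict ∘ₗ derivative ^ (k : ℕ)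
  obtain ⟨C, hC, hbound⟩ := exists_norm_apply_le_of_injective
    ((polynomialToL1 a b).domRestrict (degreeLT ℝ n))
    ((polynomialToL1_injective hab).comp Subtype.val_injective) (jet.domRestrict (degreeLT ℝ n))
  refine ⟨C, hC, fun p hp k t ht => ?_⟩
  calc |(derivative^[k] p).eval t| = ‖jet p k ⟨t, ht⟩‖ := by
        simp [jet, restrict, Module.End.pow_apply]
    _ ≤ ‖jet p‖ := ((jet p k).norm_coe_le_norm _).trans (norm_le_pi_norm _ k)
    _ ≤ C * ‖polynomialToL1 a b p‖ := hbound ⟨p, hp⟩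
    _ = C * ∫ s in Icc a b, |p.eval s| := by rw [norm_polynomialToL1]

theorem norm_integral_add_le {E : Type*} [NormedAddCommGroup E] [NormedSpace ℝ E]
    {a b t B : ℝ} {d g : ℝ → E} (ht : t ∈ Icc a b) (hd : ∀ s ∈ Icc a b, ‖d s‖ ≤ B)
    (hg : IntegrableOn g (Icc a b)) :
    ‖∫ s in a..t, (d s + g s)‖ ≤ (b - a) * B + ∫ s in Icc a b, ‖g s‖ := by
  have hsub : Ioc a t ⊆ Icc a b := Ioc_subset_Icc_self.trans (Icc_subset_Icc_right ht.2)
  have hB : 0 ≤ B := (norm_nonneg _).trans (hd t ht)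
  have hconst : IntegrableOn (fun _ : ℝ => B) (Icc a b) := continuous_const.integrableOn_Icc
  rw [intervalIntegral.integral_of_le ht.1]
  calc ‖∫ s in Ioc a t, (d s + g s)‖ ≤ ∫ s in Ioc a t, (B + ‖g s‖) :=
        norm_integral_le_of_norm_le ((hconst.add hg.norm).mono_set hsub) <|
          (ae_restrict_mem measurableSet_Ioc).mono fun s hs =>
            norm_add_le_of_le (hd s (hsub hs)) le_rfl
    _ ≤ ∫ s in Icc a b, (B + ‖g s‖) :=
        setIntegral_mono_set (hconst.add hg.norm) (ae_of_all _ fun s => by positivity)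
          hsub.eventuallyLE
    _ = (b - a) * B + ∫ s in Icc a b, ‖g s‖ := by
        rw [integral_add hconst hg.norm, setIntegral_const, Real.volume_real_Icc_of_le
          (ht.1.trans ht.2), smul_eq_mul]

theorem norm_sub_le_of_eq_integral {E : Type*} [NormedAddCommGroup E] [NormedSpace ℝ E]
    [CompleteSpace E] {a b t B : ℝ} {u v g q q' : ℝ → E} (ht : t ∈ Icc a b)
    (hv : IntegrableOn v (Icc a b)) (hg : IntegrableOn g (Icc a b))
    (hu : u t = u a + ∫ s in a..t, (v s + g s))
    (hq : ∀ s ∈ Icc a b, HasDerivAt q (q' s) s) (hq' : IntegrableOn q' (Icc a b))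
    (hstart : q a = u a) (hB : ∀ s ∈ Icc a b, ‖v s - q' s‖ ≤ B) :
    ‖u t - q t‖ ≤ (b - a) * B + ∫ s in Icc a b, ‖g s‖ := by
  have hsub : uIcc a t ⊆ Icc a b := uIcc_of_le ht.1 ▸ Icc_subset_Icc_right ht.2
  have hq'_int : IntervalIntegrable q' volume a t := (hq'.mono_set hsub).intervalIntegrable
  have hvg_int : IntervalIntegrable (fun s => v s + g s) volume a t :=
    ((hv.add hg).mono_set hsub).intervalIntegrable
  have hq_eq : ∫ s in a..t, q' s = q t - q a :=
    intervalIntegral.integral_eq_sub_of_hasDerivAt (fun s hs => hq s (hsub hs)) hq'_int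
  have herr : u t - q t = ∫ s in a..t, ((v s - q' s) + g s) := by
    simp only [sub_add_eq_add_sub]
    rw [intervalIntegral.integral_sub hvg_int hq'_int, hq_eq, hu, hstart]
    abel
  exact herr ▸ norm_integral_add_le ht hB hg

theorem integral_abs_apply_le {α ι : Type*} [MeasurableSpace α] [Fintype ι] {μ : Measure α}
    {f : α → EuclideanSpace ℝ ι} (hf : Integrable f μ) (i : ι) :
    ∫ x, |f x i| ∂μ ≤ ∫ x, ‖f x‖ ∂μ :=
  integral_mono (hf.eval_piLp i).abs hf.norm fun x => PiLp.norm_apply_le (f x) i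

/-- `z` solves the canonical observable system of dimension `m + 1` on `[0, 1]` with perturbation
`f`: `ż_i = z_{i+1} + f_i` for `i < m` and `ż_m = f_m`, coordinates being numbered from `0`.
The differential equations together with the absolute continuity of `z` are encoded as integral
equations. -/
structure IsCanonicalSolution {m : ℕ} (z f : ℝ → EuclideanSpace ℝ (Fin (m + 1))) : Prop where
  continuousOn : ContinuousOn z (Icc 0 1)
  integrableOn : IntegrableOn f (Icc 0 1)
  castSucc_eq (i : Fin m) {t : ℝ} (ht : t ∈ Icc 0 1) :
    z t i.castSucc = z 0 i.castSucc + ∫ s in (0 : ℝ)..t, (z s i.succ + f s i.castSucc)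
  last_eq {t : ℝ} (ht : t ∈ Icc 0 1) :
    z t (Fin.last m) = z 0 (Fin.last m) + ∫ s in (0 : ℝ)..t, f s (Fin.last m)

namespace IsCanonicalSolution

variable {m : ℕ} {z f : ℝ → EuclideanSpace ℝ (Fin (m + 1))}

theorem abs_sub_iterate_derivative_eval_le (h : IsCanonicalSolution z f) {p : ℝ[X]}
    (hp : p ∈ degreeLT ℝ (m + 1)) (hjet : ∀ i : Fin (m + 1), (derivative^[i] p).eval 0 = z 0 i)
    (i : Fin (m + 1)) {t : ℝ} (ht : t ∈ Icc 0 1) :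
    |z t i - (derivative^[i] p).eval t| ≤ (m + 1 - i) * ∫ s in Icc 0 1, ‖f s‖ := by
  have hf_coord := integral_abs_apply_le h.integrableOn
  induction i using Fin.reverseInduction generalizing t with
  | last =>
    have hderiv : derivative (derivative^[m] p) = 0 :=
      (Function.iterate_succ_apply' derivative m p).symm.trans
        (iterate_derivative_eq_zero_of_degree_lt (mem_degreeLT.mp hp))
    have herr : |z t (Fin.last m) - (derivative^[m] p).eval t|
        ≤ (1 - 0) * 0 + ∫ s in Icc 0 1, |f s (Fin.last m)| :=
      norm_sub_le_of_eq_integral (B := 0) (u := fun t => z t (Fin.last m)) (v := 0) (q' := 0) ht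
        integrableOn_zero (h.integrableOn.eval_piLp _) (by simpa using h.last_eq ht)
        (fun s _ => by simpa [hderiv] using (derivative^[m] p).hasDerivAt s)
        integrableOn_zero (hjet (Fin.last m)) (by simp)
    rw [Fin.val_last]
    linarith [hf_coord (Fin.last m)]
  | cast i ih =>
    have hz : IntegrableOn (fun s => z s i.succ) (Icc 0 1) :=
      h.continuousOn.integrableOn_Icc.eval_piLp _
    have herr : |z t i.castSucc - (derivative^[i] p).eval t|
        ≤ (1 - 0) * ((m + 1 - (i + 1 : ℕ)) * ∫ s in Icc 0 1, ‖f s‖) +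
          ∫ s in Icc 0 1, |f s i.castSucc| :=
      norm_sub_le_of_eq_integral (u := fun t => z t i.castSucc) ht hz
        (h.integrableOn.eval_piLp _) (h.castSucc_eq i ht)
        (fun s _ => (derivative^[i] p).hasDerivAt s)
        (integrableOn_eval_Icc _ 0 1) (hjet i.castSucc) fun s hs => by
          simpa only [Real.norm_eq_abs, Fin.val_succ, Function.iterate_succ_apply'] using ih hs
    rw [Fin.val_castSucc]
    push_cast at herr
    linarith [hf_coord i.castSucc]

theorem integral_abs_eval_le (h : IsCanonicalSolution z f) {p : ℝ[X]}
    (hp : p ∈ degreeLT ℝ (m + 1)) (hjet : ∀ i : Fin (m + 1), (derivative^[i] p).eval 0 = z 0 i) :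
    ∫ t in Icc 0 1, |p.eval t| ≤
      (∫ t in Icc 0 1, |z t 0|) + (m + 1) * ∫ t in Icc 0 1, ‖f t‖ := by
  have hy : IntegrableOn (fun t => |z t 0|) (Icc 0 1) :=
    (h.continuousOn.integrableOn_Icc.eval_piLp 0).abs
  have hconst (B : ℝ) : IntegrableOn (fun _ : ℝ => B) (Icc 0 1) :=
    continuous_const.integrableOn_Icc
  calc ∫ t in Icc 0 1, |p.eval t|
      ≤ ∫ t in Icc 0 1, (|z t 0| + (m + 1) * ∫ s in Icc 0 1, ‖f s‖) := by
        refine setIntegral_mono_on (integrableOn_eval_Icc p 0 1).abs (hy.add (hconst _))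
          measurableSet_Icc fun t ht => ?_
        have herr : |z t 0 - p.eval t| ≤ (m + 1) * ∫ s in Icc 0 1, ‖f s‖ := by
          simpa using h.abs_sub_iterate_derivative_eval_le hp hjet 0 ht
        have := abs_sub_abs_le_abs_sub (p.eval t) (z t 0)
        rw [abs_sub_comm] at herr
        linarith
    _ = (∫ t in Icc 0 1, |z t 0|) + (m + 1) * ∫ t in Icc 0 1, ‖f t‖ := by
        rw [integral_add hy (hconst _), setIntegral_const, Real.volume_real_Icc_of_le zero_le_one,
          sub_zero, one_smul]

theorem exists_abs_apply_le (m : ℕ) :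
    ∃ C > 0, ∀ z f : ℝ → EuclideanSpace ℝ (Fin (m + 1)), IsCanonicalSolution z f →
      ∀ t ∈ Icc 0 1, ∀ i,
        |z t i| ≤ C * ((∫ s in Icc 0 1, |z s 0|) + ∫ s in Icc 0 1, ‖f s‖) := by
  obtain ⟨K, hK, hpoly⟩ := exists_abs_iterate_derivative_eval_le (zero_lt_one' ℝ) (m + 1)
  refine ⟨(K + 1) * (m + 1), by positivity, fun z f h t ht i => ?_⟩
  obtain ⟨p, hp, hjet⟩ := exists_mem_degreeLT_iterate_derivative_eval_zero (z 0)
  set Y := ∫ s in Icc 0 1, |z s 0|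
  set F := ∫ s in Icc 0 1, ‖f s‖
  have hY : 0 ≤ Y := by positivity
  have hp_le : |(derivative^[i] p).eval t| ≤ K * (Y + (m + 1) * F) :=
    (hpoly p hp i t ht).trans (by gcongr; exact h.integral_abs_eval_le hp hjet)
  have herr : |z t i - (derivative^[i] p).eval t| ≤ (m + 1) * F :=
    (h.abs_sub_iterate_derivative_eval_le hp hjet i ht).trans (by gcongr; simp)
  calc |z t i| ≤ |(derivative^[i] p).eval t| + |z t i - (derivative^[i] p).eval t| := by
        linarith [abs_sub_abs_le_abs_sub (z t i) ((derivative^[i] p).eval t)]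
    _ ≤ K * (Y + (m + 1) * F) + (m + 1) * F := add_le_add hp_le herr
    _ ≤ K * ((m + 1) * Y + (m + 1) * F) + ((m + 1) * Y + (m + 1) * F) := by
        gcongr
        · exact le_mul_of_one_le_left hY (by simp)
        · exact le_add_of_nonneg_left (by positivity)
    _ = (K + 1) * (m + 1) * (Y + F) := by ring

theorem exists_norm_le (m : ℕ) :
    ∃ C > 0, ∀ z f : ℝ → EuclideanSpace ℝ (Fin (m + 1)), IsCanonicalSolution z f →
      ∀ t ∈ Icc 0 1, ‖z t‖ ≤ C * ((∫ s in Icc 0 1, |z s 0|) + ∫ s in Icc 0 1, ‖f s‖) := by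
  obtain ⟨C, hC, hcoord⟩ := exists_abs_apply_le m
  obtain ⟨D, hD, hnorm⟩ := exists_norm_apply_le_of_injective
    (WithLp.linearEquiv 2 ℝ (Fin (m + 1) → ℝ)).toLinearMap
    (WithLp.linearEquiv 2 ℝ (Fin (m + 1) → ℝ)).injective LinearMap.id
  refine ⟨D * C, by positivity, fun z f h t ht => (hnorm (z t)).trans ?_⟩
  rw [mul_assoc]
  gcongr
  exact (pi_norm_le_iff_of_nonneg (by positivity)).mpr (hcoord z f h t ht)

end IsCanonicalSolution

/-- **L¹ estimate for the canonical observable system with integrable perturbation.**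
For the canonical (Brunovsky) observable system `ż_i = z_{i+1} + f_i` (`i+1 < n`),
`ż_{n-1} = f_{n-1}` (0-indexed), with observation `y = z₀`, there is `c > 0`
depending only on `n` such that whenever `z` is absolutely continuous on `[0,1]`
and `f` is integrable on `[0,1]`, one has
`∫₀¹ ‖z‖ ≤ c (∫₀¹ |y| + ∫₀¹ ‖f‖)`. -/
theorem canonical_system_estimate_integrable_perturbation (n : ℕ) (hn : 0 < n) :
    ∃ c > 0, ∀ (z f : ℝ → EuclideanSpace ℝ (Fin n)),
      ContinuousOn z (Set.Icc 0 1) →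
      IntegrableOn f (Set.Icc 0 1) →
      (∀ (i : Fin n) (h : (i : ℕ) + 1 < n), ∀ t ∈ Set.Icc (0:ℝ) 1,
        z t i = z 0 i + ∫ s in (0:ℝ)..t, (z s ⟨(i : ℕ) + 1, h⟩ + f s i)) →
      (∀ i : Fin n, (i : ℕ) + 1 = n → ∀ t ∈ Set.Icc (0:ℝ) 1,
        z t i = z 0 i + ∫ s in (0:ℝ)..t, f s i) →
      (∫ t in Set.Icc (0:ℝ) 1, ‖z t‖) ≤
        c * ((∫ t in Set.Icc (0:ℝ) 1, |z t ⟨0, hn⟩|) +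
             ∫ t in Set.Icc (0:ℝ) 1, ‖f t‖) := by
  obtain ⟨m, rfl⟩ := Nat.exists_eq_add_one.mpr hn
  obtain ⟨c, hc, hsup⟩ := IsCanonicalSolution.exists_norm_le m
  refine ⟨c, hc, fun z f hz hf hchain hlast => ?_⟩
  have hsol : IsCanonicalSolution z f :=
    { continuousOn := hz
      integrableOn := hf
      castSucc_eq := fun i t ht => hchain i.castSucc (by simp) t ht
      last_eq := fun ht => hlast (Fin.last m) rfl _ ht }
  have hmean := norm_setIntegral_le_of_norm_le_const (f := fun t => ‖z t‖) (μ := volume)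
    measure_Icc_lt_top fun t ht => (norm_norm (z t)).trans_le (hsup z f hsol t ht)
  rw [Real.volume_real_Icc_of_le zero_le_one, sub_zero, mul_one] at hmean
  exact (le_abs_self _).trans hmean
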